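/- arXiv:2506.15836 — 2 statements merged into one kernel-verified Lean document; each statement's English description precedes it below -/
import Mathlib

section
/- Let 𝒳 and 𝒴 be finite nonempty types, let W : 𝒳 → 𝒴 → ℝ satisfy W x y > 0 for all x, y and Σ_y W x y = 1 for every x, and let P : ℝ → 𝒳 → ℝ be a family of probability mass functions such that for every ψ ∈ ℝ and x ∈ 𝒳 one has P ψ x > 0 and Σ_x P ψ x = 1, and such that for each x the map ψ ↦ P ψ x is differentiable. Define the output marginal p ψ y = Σ_x P ψ x · W x y and the mutual information I(ψ) = Σ_{x,y} P ψ x · W x y · log( W x y / p ψ y ). Then for every ψ, I is differentiable at ψ with derivative I'(ψ) = Σ_{x,y} P ψ x · W x y · (d/dψ log(P ψ x)) · log( W x y / p ψ y ). -/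
/-!
For a fixed channel `W`, mutual information is the function `I(q) = H(qW) - ∑ x, q x * H(W x)` of
the input distribution `q`, so its partial derivatives are `∂I/∂q(x) = D(W x ‖ qW) - 1`. Along a
family `P t` of probability vectors the velocities sum to zero, which kills the constant `-1`; the
log-derivative identity `P' = P * (log P)'` turns what is left into the score formula.
-/

open Filter Topology
open Real (log negMulLog hasDerivAt_negMulLog)

/-- The Shannon entropy, in nats, of a weight `r` on a finite type, with `0 * log 0 = 0`. -/
noncomputable def entropy {ι : Type*} [Fintype ι] (r : ι → ℝ) : ℝ :=
  ∑ i, negMulLog (r i)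

/-- The relative entropy `D(r ‖ s)`, in nats. It is real-valued, hence meaningful only when `r`
vanishes wherever `s` does: elsewhere the infinite summands are replaced by `0`. -/
noncomputable def relEntropy {ι : Type*} [Fintype ι] (r s : ι → ℝ) : ℝ :=
  ∑ i, r i * log (r i / s i)

/-- The output distribution `qW` of the channel with transition probabilities `W x y = W(y|x)`
under the input distribution `q`. -/
def outputDist {𝒳 𝒴 : Type*} [Fintype 𝒳] (W : 𝒳 → 𝒴 → ℝ) (q : 𝒳 → ℝ) (y : 𝒴) : ℝ :=
  ∑ x, q x * W x y

/-- The mutual information between the input and the output of the channel `W` under the input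
distribution `q`, encoded as the average relative entropy `D(W x ‖ qW)`. Weights are not required
to be normalized, so that `q` can be varied freely. -/
noncomputable def mutualInfo {𝒳 𝒴 : Type*} [Fintype 𝒳] [Fintype 𝒴]
    (W : 𝒳 → 𝒴 → ℝ) (q : 𝒳 → ℝ) : ℝ :=
  ∑ x, q x * relEntropy (W x) (outputDist W q)

theorem relEntropy_eq_neg_sum_sub_entropy {ι : Type*} [Fintype ι] {r s : ι → ℝ}
    (h : ∀ i, s i = 0 → r i = 0) :
    relEntropy r s = -∑ i, r i * log (s i) - entropy r := by
  rw [relEntropy, entropy, ← Finset.sum_neg_distrib, ← Finset.sum_sub_distrib]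
  refine Finset.sum_congr rfl fun i _ => ?_
  by_cases hr : r i = 0
  · simp [hr]
  · rw [Real.log_div hr (mt (h i) hr), negMulLog]
    ring

section Channel

variable {𝒳 𝒴 : Type*} [Fintype 𝒳] {W : 𝒳 → 𝒴 → ℝ} {q : 𝒳 → ℝ}

theorem eq_zero_of_outputDist_eq_zero (hW : ∀ x y, 0 ≤ W x y) (hq : ∀ x, 0 < q x) {y : 𝒴}
    (hy : outputDist W q y = 0) (x : 𝒳) : W x y = 0 := by
  have hterm : q x * W x y = 0 :=
    (Finset.sum_eq_zero_iff_of_nonneg fun x _ => mul_nonneg (hq x).le (hW x y)).1 hy x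
      (Finset.mem_univ x)
  exact (mul_eq_zero.1 hterm).resolve_left (hq x).ne'

variable [Fintype 𝒴]

theorem mutualInfo_eq_entropy_sub (hW : ∀ x y, 0 ≤ W x y) (hq : ∀ x, 0 < q x) :
    mutualInfo W q = entropy (outputDist W q) - ∑ x, q x * entropy (W x) := by
  have hcross : ∑ x, q x * ∑ y, W x y * log (outputDist W q y) = -entropy (outputDist W q) := by
    simp only [entropy, negMulLog, neg_mul, Finset.sum_neg_distrib, neg_neg, Finset.mul_sum,
      ← mul_assoc]
    rw [Finset.sum_comm]
    simp only [← Finset.sum_mul, outputDist]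
  have hrel (x : 𝒳) : relEntropy (W x) (outputDist W q) =
      -∑ y, W x y * log (outputDist W q y) - entropy (W x) :=
    relEntropy_eq_neg_sum_sub_entropy fun y hy => eq_zero_of_outputDist_eq_zero hW hq hy x
  simp only [mutualInfo, hrel, mul_sub, mul_neg, Finset.sum_sub_distrib, Finset.sum_neg_distrib,
    hcross, neg_neg]

end Channel

section Family

variable {E : Type*} [NormedAddCommGroup E] [NormedSpace ℝ E]

theorem smul_fderiv_log {f : E → ℝ} {ψ : E} (hf : DifferentiableAt ℝ f ψ) (hψ : f ψ ≠ 0) :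
    f ψ • fderiv ℝ (fun t => log (f t)) ψ = fderiv ℝ f ψ := by
  rw [fderiv.log hf hψ, smul_inv_smul₀ hψ]

theorem sum_fderiv_eq_zero_of_sum_eventually_const {ι : Type*} [Fintype ι] {P : E → ι → ℝ} {ψ : E}
    {c : ℝ} (hsum : ∀ᶠ t in 𝓝 ψ, ∑ i, P t i = c)
    (hdiff : ∀ i, DifferentiableAt ℝ (fun t => P t i) ψ) :
    ∑ i, fderiv ℝ (fun t => P t i) ψ = 0 :=
  (HasFDerivAt.fun_sum fun i _ => (hdiff i).hasFDerivAt).unique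
    ((hasFDerivAt_const c ψ).congr_of_eventuallyEq hsum)

variable {𝒳 𝒴 : Type*} [Fintype 𝒳] {W : 𝒳 → 𝒴 → ℝ} {P : E → 𝒳 → ℝ} {P' : 𝒳 → E →L[ℝ] ℝ} {ψ : E}

theorem hasFDerivAt_outputDist (W : 𝒳 → 𝒴 → ℝ)
    (hP : ∀ x, HasFDerivAt (fun t => P t x) (P' x) ψ) (y : 𝒴) :
    HasFDerivAt (fun t => outputDist W (P t) y) (∑ x, W x y • P' x) ψ :=
  HasFDerivAt.fun_sum fun x _ => (hP x).mul_const (W x y)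

theorem hasFDerivAt_negMulLog_outputDist (hW : ∀ x y, 0 ≤ W x y) (hPpos : ∀ x, 0 < P ψ x)
    (hP : ∀ x, HasFDerivAt (fun t => P t x) (P' x) ψ) (y : 𝒴) :
    HasFDerivAt (fun t => negMulLog (outputDist W (P t) y))
      ((-log (outputDist W (P ψ) y) - 1) • ∑ x, W x y • P' x) ψ := by
  by_cases hy : outputDist W (P ψ) y = 0
  · -- `negMulLog` is not differentiable at `0`, but here `outputDist W · y` vanishes identically.
    have hWy : ∀ x, W x y = 0 := eq_zero_of_outputDist_eq_zero hW hPpos hy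
    simpa [outputDist, hWy] using hasFDerivAt_const (0 : ℝ) ψ
  · exact (hasDerivAt_negMulLog hy).comp_hasFDerivAt ψ (hasFDerivAt_outputDist W hP y)

variable [Fintype 𝒴]

theorem hasFDerivAt_mutualInfo (hW : ∀ x y, 0 ≤ W x y) (hPpos : ∀ x, 0 < P ψ x)
    (hP : ∀ x, HasFDerivAt (fun t => P t x) (P' x) ψ) :
    HasFDerivAt (fun t => mutualInfo W (P t))
      (∑ x, (relEntropy (W x) (outputDist W (P ψ)) - ∑ y, W x y) • P' x) ψ := by
  have hpos : ∀ᶠ t in 𝓝 ψ, ∀ x, 0 < P t x :=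
    eventually_all.2 fun x => (hP x).continuousAt.eventually_const_lt (hPpos x)
  have hdecomp : (fun t => mutualInfo W (P t)) =ᶠ[𝓝 ψ]
      fun t => entropy (outputDist W (P t)) - ∑ x, P t x * entropy (W x) :=
    hpos.mono fun t ht => mutualInfo_eq_entropy_sub hW ht
  have hout : HasFDerivAt (fun t => entropy (outputDist W (P t)))
      (∑ y, (-log (outputDist W (P ψ) y) - 1) • ∑ x, W x y • P' x) ψ :=
    HasFDerivAt.fun_sum fun y _ => hasFDerivAt_negMulLog_outputDist hW hPpos hP y
  have hcond : HasFDerivAt (fun t => ∑ x, P t x * entropy (W x))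
      (∑ x, entropy (W x) • P' x) ψ :=
    HasFDerivAt.fun_sum fun x _ => (hP x).mul_const (entropy (W x))
  have hrel (x : 𝒳) : relEntropy (W x) (outputDist W (P ψ)) - ∑ y, W x y =
      ∑ y, (-log (outputDist W (P ψ) y) - 1) * W x y - entropy (W x) := by
    rw [relEntropy_eq_neg_sum_sub_entropy fun y hy => eq_zero_of_outputDist_eq_zero hW hPpos hy x]
    simp only [sub_mul, neg_mul, one_mul, Finset.sum_sub_distrib, Finset.sum_neg_distrib,
      mul_comm (log _)]
    ring
  refine ((hout.sub hcond).congr_of_eventuallyEq hdecomp).congr_fderiv ?_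
  ext v
  simp only [hrel, sub_apply, sum_apply, smul_apply, smul_eq_mul, Finset.mul_sum, Finset.sum_mul,
    sub_mul _ (entropy _), Finset.sum_sub_distrib, mul_assoc]
  rw [Finset.sum_comm]

theorem mutualInfo_hasDerivAt_score_general (hW : ∀ x y, 0 ≤ W x y) (hWsum : ∀ x, ∑ y, W x y = 1)
    (hPpos : ∀ x, 0 < P ψ x) (hPsum : ∀ᶠ t in 𝓝 ψ, ∑ x, P t x = 1)
    (hPdiff : ∀ x, DifferentiableAt ℝ (fun t => P t x) ψ) :
    HasFDerivAt (fun t => mutualInfo W (P t))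
      (∑ x, ∑ y, (P ψ x * W x y * log (W x y / outputDist W (P ψ) y)) •
        fderiv ℝ (fun t => log (P t x)) ψ) ψ := by
  refine (hasFDerivAt_mutualInfo hW hPpos fun x => (hPdiff x).hasFDerivAt).congr_fderiv ?_
  calc ∑ x, (relEntropy (W x) (outputDist W (P ψ)) - ∑ y, W x y) • fderiv ℝ (fun t => P t x) ψ
      = ∑ x, relEntropy (W x) (outputDist W (P ψ)) • fderiv ℝ (fun t => P t x) ψ := by
        simp only [hWsum, sub_smul, one_smul, Finset.sum_sub_distrib,
          sum_fderiv_eq_zero_of_sum_eventually_const hPsum hPdiff, sub_zero]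
    _ = ∑ x, ∑ y, (P ψ x * W x y * log (W x y / outputDist W (P ψ) y)) •
          fderiv ℝ (fun t => log (P t x)) ψ := by
        refine Finset.sum_congr rfl fun x _ => ?_
        rw [← smul_fderiv_log (hPdiff x) (hPpos x).ne', smul_smul, ← Finset.sum_smul,
          mul_comm (relEntropy _ _)]
        simp only [relEntropy, Finset.mul_sum, mul_assoc]

end Family

/-- Gradient of the mutual information with respect to the
input-distribution parameter ψ (paper's Theorem 5, finite alphabets,
one-dimensional parameter). -/
theorem mutualInfo_hasDerivAt_score
    {𝒳 𝒴 : Type*} [Fintype 𝒳] [Fintype 𝒴] [Nonempty 𝒳] [Nonempty 𝒴]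
    (W : 𝒳 → 𝒴 → ℝ)
    (hWpos : ∀ x y, 0 < W x y)
    (hWsum : ∀ x, ∑ y, W x y = 1)
    (P : ℝ → 𝒳 → ℝ)
    (hPpos : ∀ ψ x, 0 < P ψ x)
    (hPsum : ∀ ψ, ∑ x, P ψ x = 1)
    (hPdiff : ∀ x, Differentiable ℝ (fun ψ => P ψ x))
    (p : ℝ → 𝒴 → ℝ)
    (hp : ∀ ψ y, p ψ y = ∑ x, P ψ x * W x y)
    (I : ℝ → ℝ)
    (hI : ∀ ψ, I ψ = ∑ x, ∑ y, P ψ x * W x y * Real.log (W x y / p ψ y))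
    (ψ : ℝ) :
    HasDerivAt I
      (∑ x, ∑ y, P ψ x * W x y * deriv (fun t => Real.log (P t x)) ψ *
        Real.log (W x y / p ψ y)) ψ := by
  obtain rfl : p = fun t => outputDist W (P t) := funext₂ hp
  obtain rfl : I = fun t => mutualInfo W (P t) := funext fun t => by
    simp only [hI, mutualInfo, relEntropy, Finset.mul_sum, mul_assoc]
  simpa [mul_right_comm] using (mutualInfo_hasDerivAt_score_general (fun x y => (hWpos x y).le)
    hWsum (hPpos ψ) (.of_forall hPsum) fun x => hPdiff x ψ).hasDerivAt
end

section
/- Let n be a natural number and N = 2^n. Let F be the 2×2 matrix over ZMod 2 with rows (1,0) and (1,1), let F^{⊗n} be its n-fold Kronecker power (an N×N matrix over ZMod 2), and let B_N be the bit-reversal permutation matrix on Fin N. Then the polar generator matrix G_N = B_N · F^{⊗n} satisfies G_N · G_N = I_N, the N×N identity matrix over ZMod 2. -/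
/-!
Identify `Fin (2 ^ n)` with digit strings `Fin n → Fin 2`, least significant digit first. In these
coordinates the entry of `F^{⊗n}` at `(f, g)` is `∏ k, F (f k) (g k)`, and bit reversal is
`f ↦ f ∘ Fin.rev`, which merely permutes the factors of that product. Conjugation by the
involutory permutation matrix `B` therefore fixes `A = F^{⊗n}`, so that
`(B A)² = (B A B) A = A² = (F²)^{⊗n}`, and the polar kernel squares to `1` in characteristic two.
-/

open Matrix Kronecker

/-- The Arıkan polar kernel, the 2×2 matrix over `ZMod 2` with rows (1,0) and (1,1). -/
def polarKernel : Matrix (Fin 2) (Fin 2) (ZMod 2) := !![1, 0; 1, 1]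

/-- The index identification `Fin 2 × Fin (2^n) ≃ Fin (2^(n+1))` sending the
pair `(i₁, i₂)` (with `i₁` the major/most-significant component) to `i₂ + 2^n * i₁`. -/
def kronIdx (n : ℕ) : Fin 2 × Fin (2 ^ n) ≃ Fin (2 ^ (n + 1)) :=
  finProdFinEquiv.trans (finCongr (pow_succ' 2 n).symm)

/-- The n-fold Kronecker power of a 2×2 matrix over `ZMod 2`, as a `2^n × 2^n` matrix. -/
def kronPow (F : Matrix (Fin 2) (Fin 2) (ZMod 2)) :
    (n : ℕ) → Matrix (Fin (2 ^ n)) (Fin (2 ^ n)) (ZMod 2)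
  | 0 => 1
  | n + 1 => Matrix.reindex (kronIdx n) (kronIdx n) (F ⊗ₖ kronPow F n)

/-- The bit-reversal permutation on `Fin (2^n)`: the index with binary digits
(b₀, …, b_{n−1}) (least significant bit first) is sent to the index with binary
digits (b_{n−1}, …, b₀). Defined recursively: the least significant bit of the
input becomes the most significant bit of the output. -/
def bitRevPerm : (n : ℕ) → Equiv.Perm (Fin (2 ^ n))
  | 0 => Equiv.refl _
  | n + 1 =>
    (finCongr (pow_succ 2 n)).trans <|
      finProdFinEquiv.symm.trans <|
        (Equiv.prodCongr (bitRevPerm n) (Equiv.refl (Fin 2))).trans <|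
          (Equiv.prodComm (Fin (2 ^ n)) (Fin 2)).trans <|
            finProdFinEquiv.trans (finCongr (pow_succ' 2 n).symm)

/-- The permutation matrix over `ZMod 2` of a permutation σ of `Fin N`:
its (i, j) entry is 1 exactly when `i = σ j`. -/
def permMatrix {N : ℕ} (σ : Equiv.Perm (Fin N)) : Matrix (Fin N) (Fin N) (ZMod 2) :=
  Matrix.of fun i j => if i = σ j then 1 else 0

/-- The bit-reversal permutation matrix on `Fin (2^n)`. -/
def bitRevMatrix (n : ℕ) : Matrix (Fin (2 ^ n)) (Fin (2 ^ n)) (ZMod 2) :=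
  permMatrix (bitRevPerm n)

section Digits

variable {m n : ℕ}

theorem finFunctionFinEquiv_cons (b : Fin m) (f : Fin n → Fin m) :
    finFunctionFinEquiv (Fin.cons b f : Fin (n + 1) → Fin m) =
      finCongr (pow_succ m n).symm (finProdFinEquiv (finFunctionFinEquiv f, b)) := by
  ext
  simp only [finFunctionFinEquiv_apply, Fin.sum_univ_succ, Fin.cons_zero, Fin.cons_succ,
    Fin.val_zero, Fin.val_succ, finCongr_apply, Fin.val_cast, finProdFinEquiv_apply_val,
    Finset.mul_sum, pow_zero, mul_one, pow_succ']
  simp only [mul_left_comm]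

theorem finFunctionFinEquiv_snoc (f : Fin n → Fin m) (a : Fin m) :
    finFunctionFinEquiv (Fin.snoc f a : Fin (n + 1) → Fin m) =
      finCongr (pow_succ' m n).symm (finProdFinEquiv (a, finFunctionFinEquiv f)) := by
  ext
  simp only [finFunctionFinEquiv_apply, Fin.sum_univ_castSucc, Fin.snoc_castSucc, Fin.snoc_last,
    Fin.val_castSucc, Fin.val_last, finCongr_apply, Fin.val_cast, finProdFinEquiv_apply_val,
    mul_comm]

end Digits

theorem bitRevPerm_finFunctionFinEquiv {n : ℕ} (f : Fin n → Fin 2) :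
    bitRevPerm n (finFunctionFinEquiv f) = finFunctionFinEquiv (f ∘ Fin.rev) := by
  induction n with
  | zero => exact congrArg finFunctionFinEquiv (Subsingleton.elim _ _)
  | succ n ih =>
    cases f using Fin.consCases with
    | cons b f =>
      rw [Fin.cons_comp_rev, finFunctionFinEquiv_cons, finFunctionFinEquiv_snoc, ← ih]
      simp [bitRevPerm]

theorem bitRevPerm_involutive (n : ℕ) : Function.Involutive (bitRevPerm n) := by
  intro i
  obtain ⟨f, rfl⟩ := finFunctionFinEquiv.surjective i
  rw [bitRevPerm_finFunctionFinEquiv, bitRevPerm_finFunctionFinEquiv, Function.comp_assoc,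
    Fin.rev_involutive.comp_self, Function.comp_id]

section KroneckerPower

variable (F : Matrix (Fin 2) (Fin 2) (ZMod 2)) (n : ℕ)

theorem kronPow_one : kronPow 1 n = 1 := by
  induction n with
  | zero => rfl
  | succ n ih => rw [kronPow, ih, one_kronecker_one, reindex_apply, submatrix_one_equiv]

theorem kronPow_mul (G : Matrix (Fin 2) (Fin 2) (ZMod 2)) :
    kronPow (F * G) n = kronPow F n * kronPow G n := by
  induction n with
  | zero => exact (one_mul 1).symm
  | succ n ih =>
    simp only [kronPow, ih, mul_kronecker_mul, reindex_apply, submatrix_mul_equiv]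

theorem kronPow_apply_finFunctionFinEquiv {n : ℕ} (f g : Fin n → Fin 2) :
    kronPow F n (finFunctionFinEquiv f) (finFunctionFinEquiv g) = ∏ k, F (f k) (g k) := by
  induction n with
  | zero => rw [Subsingleton.elim f g, kronPow, one_apply_eq, Fin.prod_univ_zero]
  | succ n ih =>
    cases f using Fin.snocCases with | snoc f a
    cases g using Fin.snocCases with | snoc g b
    simp [finFunctionFinEquiv_snoc, Fin.prod_univ_castSucc, kronPow, kronIdx, ih, mul_comm]

theorem kronPow_submatrix_bitRevPerm :
    (kronPow F n).submatrix (bitRevPerm n) (bitRevPerm n) = kronPow F n := by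
  ext i j
  obtain ⟨f, rfl⟩ := finFunctionFinEquiv.surjective i
  obtain ⟨g, rfl⟩ := finFunctionFinEquiv.surjective j
  simp only [submatrix_apply, bitRevPerm_finFunctionFinEquiv, kronPow_apply_finFunctionFinEquiv,
    Function.comp_apply]
  exact Equiv.prod_comp Fin.revPerm fun k => F (f k) (g k)

end KroneckerPower

section PolarTransform

theorem permMatrix_eq_toMatrix_symm {N : ℕ} (σ : Equiv.Perm (Fin N)) :
    permMatrix σ = σ.symm.toPEquiv.toMatrix := by
  ext i j
  simp [permMatrix, PEquiv.toMatrix_apply, Equiv.eq_symm_apply, eq_comm]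

theorem permMatrix_mul_mul_permMatrix {N : ℕ} (σ τ : Equiv.Perm (Fin N))
    (A : Matrix (Fin N) (Fin N) (ZMod 2)) :
    permMatrix σ * A * permMatrix τ = A.submatrix σ.symm τ := by
  rw [permMatrix_eq_toMatrix_symm, permMatrix_eq_toMatrix_symm, PEquiv.toMatrix_toPEquiv_mul,
    PEquiv.mul_toMatrix_toPEquiv, submatrix_submatrix, Equiv.symm_symm, Function.comp_id,
    Function.id_comp]

variable (F : Matrix (Fin 2) (Fin 2) (ZMod 2)) (n : ℕ)

theorem bitRevMatrix_mul_kronPow_mul_bitRevMatrix :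
    bitRevMatrix n * kronPow F n * bitRevMatrix n = kronPow F n := by
  rw [bitRevMatrix, permMatrix_mul_mul_permMatrix,
    Function.Involutive.symm_eq_self_of_involutive _ (bitRevPerm_involutive n),
    kronPow_submatrix_bitRevPerm]

theorem bitRevMatrix_mul_kronPow_mul_self :
    (bitRevMatrix n * kronPow F n) * (bitRevMatrix n * kronPow F n) = kronPow (F * F) n := by
  rw [← Matrix.mul_assoc, bitRevMatrix_mul_kronPow_mul_bitRevMatrix, kronPow_mul]

end PolarTransform

theorem polarKernel_mul_self : polarKernel * polarKernel = 1 := by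
  decide

theorem polarGenerator_mul_self_eq_one_general {F : Matrix (Fin 2) (Fin 2) (ZMod 2)}
    (hF : F * F = 1) (n : ℕ) :
    (bitRevMatrix n * kronPow F n) * (bitRevMatrix n * kronPow F n) = 1 := by
  rw [bitRevMatrix_mul_kronPow_mul_self, hF, kronPow_one]

/-- The polar generator matrix `G_N = B_N · F^{⊗n}` is an involution:
`G_N · G_N = I_N` over `ZMod 2`. -/
theorem polarGenerator_mul_self_eq_one (n : ℕ) :
    (bitRevMatrix n * kronPow polarKernel n) * (bitRevMatrix n * kronPow polarKernel n)
      = (1 : Matrix (Fin (2 ^ n)) (Fin (2 ^ n)) (ZMod 2)) :=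
  polarGenerator_mul_self_eq_one_general polarKernel_mul_self n
end
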